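/- Quantum mutual information satisfies I(∑_k p_k ρ^k) ≤ ∑_k p_k I(ρ^k) + S({p_k}) for any finite convex mixture of bipartite density operators ρ^k with weights p_k, where S({p_k}) is the Shannon entropy of the weights. -/

import Mathlib

open scoped BigOperators Kronecker ComplexOrder
open Matrix Filter Topology

noncomputable section

/-- Shannon entropy (log base 2) of a finitely supported distribution. -/
def shannon {I : Type} [Fintype I] (p : I → ℝ) : ℝ := -∑ i, p i * Real.logb 2 (p i)

/-- `p` is a probability distribution. -/
def IsProbDist {I : Type} [Fintype I] (p : I → ℝ) : Prop :=
  (∀ i, 0 ≤ p i) ∧ ∑ i, p i = 1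

/-- First marginal of a joint distribution. -/
def margA {I J : Type} [Fintype J] (p : I × J → ℝ) : I → ℝ := fun i => ∑ j, p (i, j)

/-- Second marginal of a joint distribution. -/
def margB {I J : Type} [Fintype I] (p : I × J → ℝ) : J → ℝ := fun j => ∑ i, p (i, j)

/-- Classical mutual information of a joint distribution. -/
def classMI {I J : Type} [Fintype I] [Fintype J] (p : I × J → ℝ) : ℝ :=
  shannon (margA p) + shannon (margB p) - shannon p

/-- Kullback-Leibler divergence (log base 2). -/
def klDiv {I : Type} [Fintype I] (p q : I → ℝ) : ℝ := ∑ i, p i * Real.logb 2 (p i / q i)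

/-- A density operator: positive semidefinite with unit trace. -/
def IsDensity {n : Type} [Fintype n] (ρ : Matrix n n ℂ) : Prop :=
  ρ.PosSemidef ∧ ρ.trace = 1

/-- Von Neumann entropy (log base 2) via the eigenvalues of a Hermitian matrix. -/
def vnEntropy {n : Type} [Fintype n] [DecidableEq n] (ρ : Matrix n n ℂ) : ℝ :=
  if h : ρ.IsHermitian then -∑ i, h.eigenvalues i * Real.logb 2 (h.eigenvalues i) else 0

/-- Partial trace over the second tensor factor. -/
def ptraceB {A B : Type} [Fintype B] (ρ : Matrix (A × B) (A × B) ℂ) : Matrix A A ℂ :=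
  Matrix.of fun a a' => ∑ b, ρ (a, b) (a', b)

/-- Partial trace over the first tensor factor. -/
def ptraceA {A B : Type} [Fintype A] (ρ : Matrix (A × B) (A × B) ℂ) : Matrix B B ℂ :=
  Matrix.of fun b b' => ∑ a, ρ (a, b) (a, b')

/-- Quantum mutual information I(A:B) = S(ρ_A) + S(ρ_B) - S(ρ_{AB}). -/
def mutInfo {A B : Type} [Fintype A] [Fintype B] [DecidableEq A] [DecidableEq B]
    (ρ : Matrix (A × B) (A × B) ℂ) : ℝ :=
  vnEntropy (ptraceB ρ) + vnEntropy (ptraceA ρ) - vnEntropy ρ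

/-- Tensor product of two bipartite states, with the cut (A₁A₂ : B₁B₂). -/
def tens2 {A₁ B₁ A₂ B₂ : Type}
    (ρ : Matrix (A₁ × B₁) (A₁ × B₁) ℂ) (σ : Matrix (A₂ × B₂) (A₂ × B₂) ℂ) :
    Matrix ((A₁ × A₂) × (B₁ × B₂)) ((A₁ × A₂) × (B₁ × B₂)) ℂ :=
  Matrix.of fun x y => ρ (x.1.1, x.2.1) (y.1.1, y.2.1) * σ (x.1.2, x.2.2) (y.1.2, y.2.2)

/-- n-fold tensor power of a bipartite state, with the A^n : B^n cut. -/
def tpow {A B : Type} (σ : Matrix (A × B) (A × B) ℂ) (n : ℕ) :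
    Matrix ((Fin n → A) × (Fin n → B)) ((Fin n → A) × (Fin n → B)) ℂ :=
  Matrix.of fun x y => ∏ i, σ (x.1 i, x.2 i) (y.1 i, y.2 i)

/-- Reduced state of the k-th copy (partial trace over all other copies). -/
def copyMarginal {A B : Type} [Fintype A] [Fintype B] [DecidableEq A] [DecidableEq B] {n : ℕ}
    (ρ : Matrix ((Fin n → A) × (Fin n → B)) ((Fin n → A) × (Fin n → B)) ℂ) (k : Fin n) :
    Matrix (A × B) (A × B) ℂ :=
  Matrix.of fun x y => ∑ f : Fin n → A, ∑ g : Fin n → B,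
    if f k = x.1 ∧ g k = x.2 then
      ρ (f, g) (Function.update f k y.1, Function.update g k y.2) else 0

/-- `τ` is an n-copy broadcast state of `ρ`. -/
def IsBroadcast {A B : Type} [Fintype A] [Fintype B] [DecidableEq A] [DecidableEq B] (n : ℕ)
    (τ : Matrix ((Fin n → A) × (Fin n → B)) ((Fin n → A) × (Fin n → B)) ℂ)
    (ρ : Matrix (A × B) (A × B) ℂ) : Prop :=
  IsDensity τ ∧ ∀ k : Fin n, copyMarginal τ k = ρ

/-- n-copy broadcast mutual information (I_b)_n. -/
def Ib {A B : Type} [Fintype A] [Fintype B] [DecidableEq A] [DecidableEq B] (n : ℕ)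
    (ρ : Matrix (A × B) (A × B) ℂ) : ℝ :=
  sInf {x | ∃ τ, IsBroadcast n τ ρ ∧ x = mutInfo τ}

/-- Partial trace of a state on (A A' : B B') over the primed (ancilla) systems. -/
def ptracePrime {A B A' B' : Type} [Fintype A'] [Fintype B']
    (τ : Matrix ((A × A') × (B × B')) ((A × A') × (B × B')) ℂ) :
    Matrix (A × B) (A × B) ℂ :=
  Matrix.of fun x y => ∑ a', ∑ b', τ ((x.1, a'), (x.2, b')) ((y.1, a'), (y.2, b'))

/-- Partial trace of a state on (A A' : B B') over the unprimed systems. -/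
def ptraceMain {A B A' B' : Type} [Fintype A] [Fintype B]
    (τ : Matrix ((A × A') × (B × B')) ((A × A') × (B × B')) ℂ) :
    Matrix (A' × B') (A' × B') ℂ :=
  Matrix.of fun x y => ∑ a, ∑ b, τ ((a, x.1), (b, x.2)) ((a, y.1), (b, y.2))

/-- Conditional entanglement of mutual information (CEMI). -/
def EI {A B : Type} [Fintype A] [Fintype B] [DecidableEq A] [DecidableEq B]
    (ρ : Matrix (A × B) (A × B) ℂ) : ℝ :=
  (1 / 2) * sInf {x | ∃ (dA dB : ℕ)
    (τ : Matrix ((A × Fin dA) × (B × Fin dB)) ((A × Fin dA) × (B × Fin dB)) ℂ),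
    IsDensity τ ∧ ptracePrime τ = ρ ∧ x = mutInfo τ - mutInfo (ptraceMain τ)}

/-- Classical squashed entanglement, via the ensemble formula. -/
def EsqC {A B : Type} [Fintype A] [Fintype B] [DecidableEq A] [DecidableEq B]
    (ρ : Matrix (A × B) (A × B) ℂ) : ℝ :=
  (1 / 2) * sInf {x | ∃ (m : ℕ) (p : Fin m → ℝ) (σ : Fin m → Matrix (A × B) (A × B) ℂ),
    (∀ k, 0 ≤ p k) ∧ (∑ k, p k = 1) ∧ (∀ k, IsDensity (σ k)) ∧
    (∑ k, (p k : ℂ) • σ k = ρ) ∧ x = ∑ k, p k * mutInfo (σ k)}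

/-- Separability of a bipartite state. -/
def Separable {A B : Type} [Fintype A] [Fintype B]
    (ρ : Matrix (A × B) (A × B) ℂ) : Prop :=
  ∃ (m : ℕ) (p : Fin m → ℝ) (σA : Fin m → Matrix A A ℂ) (σB : Fin m → Matrix B B ℂ),
    (∀ k, 0 ≤ p k) ∧ (∑ k, p k = 1) ∧ (∀ k, IsDensity (σA k) ∧ IsDensity (σB k)) ∧
    ρ = ∑ k, (p k : ℂ) • (σA k ⊗ₖ σB k)

/-- A finite POVM. -/
def IsPOVM {A ι : Type} [Fintype A] [Fintype ι] [DecidableEq A]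
    (M : ι → Matrix A A ℂ) : Prop :=
  (∀ i, (M i).PosSemidef) ∧ ∑ i, M i = 1

/-- Outcome distribution of a local product measurement. -/
def measProb {A B ι κ : Type} [Fintype A] [Fintype B]
    (M : ι → Matrix A A ℂ) (N : κ → Matrix B B ℂ)
    (ρ : Matrix (A × B) (A × B) ℂ) : ι × κ → ℝ :=
  fun x => (((M x.1 ⊗ₖ N x.2) * ρ).trace).re

/-- Completeness condition for a family of Kraus operators. -/
def IsKraus {A A' ι : Type} [Fintype A] [Fintype A'] [Fintype ι] [DecidableEq A]
    (K : ι → Matrix A' A ℂ) : Prop :=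
  ∑ i, (K i)ᴴ * K i = 1

/-- Action of the product channel Λ_A ⊗ Λ_B (given by Kraus operators) on a bipartite state. -/
def localApply {A B A' B' ι κ : Type} [Fintype A] [Fintype B] [Fintype ι] [Fintype κ]
    (K : ι → Matrix A' A ℂ) (L : κ → Matrix B' B ℂ)
    (ρ : Matrix (A × B) (A × B) ℂ) : Matrix (A' × B') (A' × B') ℂ :=
  ∑ i, ∑ j, (K i ⊗ₖ L j) * ρ * (K i ⊗ₖ L j)ᴴ

/-- Measured relative entropy distance to separable states (with optimization over local POVMs). -/
def measREE {A B : Type} [Fintype A] [Fintype B] [DecidableEq A] [DecidableEq B]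
    (ρ : Matrix (A × B) (A × B) ℂ) : ℝ :=
  sInf {x | ∃ σ : Matrix (A × B) (A × B) ℂ, IsDensity σ ∧ Separable σ ∧
    x = sSup {y | ∃ (m m' : ℕ) (M : Fin m → Matrix A A ℂ) (N : Fin m' → Matrix B B ℂ),
      IsPOVM M ∧ IsPOVM N ∧ y = klDiv (measProb M N ρ) (measProb M N σ)}}

/-!
Mutual information is subadditive on all positive semidefinite matrices,
`I(M + N) ≤ I(M) + I(N)`, and scaling a matrix of trace `1` by `c` turns `I` into
`c I - c log c`. Summing over the matrices `pₖρᵏ` produces the Shannon entropy of the weights.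

Linearity of the trace turns `S(M + N) - S(M) - S(N)` into `D(M‖M + N) + D(N‖M + N)` for the
relative entropy `D`. Subadditivity of `S` on the `B`-marginals therefore holds because
`D(ρ‖σ) ≤ 0` for `ρ ≤ σ`, and subadditivity of `S(M_A) - S(M)` because the partial trace decreases
`D`.

Both facts compare relative entropies. Up to sign, `D(ρ‖σ)` is the expectation of the logarithm of
the relative modular operator, so it is enough to compare the resolvents of that operator, and their
matrix elements are maxima of quadratic forms: a trial matrix `X` on `A` gives the trial matrix
`X ⊗ 1` on `A ⊗ B`.
-/

section LogSums

variable {ι κ : Type*} [Fintype ι] [Fintype κ]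

theorem tendsto_sum_mul_log_add_atTop {c : ι → ℝ} (hc : ∑ i, c i = 0) (x : ι → ℝ) :
    Tendsto (fun t ↦ ∑ i, c i * Real.log (t + x i)) atTop (𝓝 0) := by
  have hlog : Tendsto (fun t ↦ ∑ i, c i * (Real.log (t + x i) - Real.log t)) atTop (𝓝 0) := by
    simpa using tendsto_finsetSum Finset.univ fun i _ ↦
      (Real.tendsto_log_comp_add_sub_log (x i)).const_mul (c i)
  refine hlog.congr fun t ↦ ?_
  simp only [mul_sub, Finset.sum_sub_distrib, ← Finset.sum_mul, hc, zero_mul, sub_zero]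

theorem hasDerivAt_sum_mul_log_add {c x : ι → ℝ} (hx : ∀ i, c i ≠ 0 → 0 < x i) {t : ℝ}
    (ht : 0 ≤ t) :
    HasDerivAt (fun t ↦ ∑ i, c i * Real.log (t + x i)) (∑ i, c i / (t + x i)) t := by
  refine HasDerivAt.fun_sum fun i _ ↦ ?_
  by_cases hi : c i = 0
  · simpa [hi] using hasDerivAt_const t (0 : ℝ)
  · have hpos : t + x i ≠ 0 := (add_pos_of_nonneg_of_pos ht (hx i hi)).ne'
    simpa [div_eq_mul_inv] using (((hasDerivAt_id t).add_const (x i)).log hpos).const_mul (c i)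

theorem sum_mul_log_nonpos {c x : ι → ℝ} (hx : ∀ i, c i ≠ 0 → 0 < x i) (hc : ∑ i, c i = 0)
    (h : ∀ t, 0 < t → 0 ≤ ∑ i, c i / (t + x i)) :
    ∑ i, c i * Real.log (x i) ≤ 0 := by
  have hderiv (t : ℝ) (ht : 0 ≤ t) := hasDerivAt_sum_mul_log_add hx ht
  have hmono : MonotoneOn (fun t ↦ ∑ i, c i * Real.log (t + x i)) (Set.Ici 0) := by
    refine monotoneOn_of_hasDerivWithinAt_nonneg (f' := fun t ↦ ∑ i, c i / (t + x i))
      (convex_Ici 0) (fun t ht ↦ (hderiv t ht).continuousAt.continuousWithinAt) ?_ ?_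
    all_goals rw [interior_Ici]
    · exact fun t ht ↦ (hderiv t (le_of_lt ht)).hasDerivWithinAt
    · exact fun t ht ↦ h t ht
  refine ge_of_tendsto (tendsto_sum_mul_log_add_atTop hc x) ?_
  filter_upwards [eventually_ge_atTop 0] with t ht
  simpa using hmono Set.self_mem_Ici ht ht

theorem sum_mul_log_le_sum_mul_log {a x : ι → ℝ} {b y : κ → ℝ} (hx : ∀ i, a i ≠ 0 → 0 < x i)
    (hy : ∀ j, b j ≠ 0 → 0 < y j) (hab : ∑ i, a i = ∑ j, b j)
    (h : ∀ t, 0 < t → ∑ j, b j / (t + y j) ≤ ∑ i, a i / (t + x i)) :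
    ∑ i, a i * Real.log (x i) ≤ ∑ j, b j * Real.log (y j) := by
  have hsigned := sum_mul_log_nonpos (c := Sum.elim a (-b)) (x := Sum.elim x y)
    (by simpa using ⟨hx, hy⟩) (by simp [hab])
    (fun t ht ↦ by simpa [neg_div] using h t ht)
  simpa using hsigned

end LogSums

section Spectral

variable {n m 𝕜 : Type*} [RCLike 𝕜] [Fintype n] [DecidableEq n] [Fintype m] [DecidableEq m]

theorem trace_diagonal_mul_mul_diagonal_mul_conjTranspose {R : Type*} [CommSemiring R] [Star R]
    (d : n → R) (X : Matrix n m R) (e : m → R) (Z : Matrix n m R) :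
    (diagonal d * X * diagonal e * Zᴴ).trace =
      ∑ z : n × m, d z.1 * e z.2 * (X z.1 z.2 * star (Z z.1 z.2)) := by
  simp only [Matrix.trace, diag_apply, mul_apply (N := Zᴴ), mul_diagonal, diagonal_mul,
    conjTranspose_apply, Fintype.sum_prod_type]
  refine Finset.sum_congr rfl fun i _ ↦ Finset.sum_congr rfl fun j _ ↦ ?_
  ring

theorem cfc_eq_mul_diagonal_mul {ρ : Matrix n n 𝕜} (hρ : ρ.IsHermitian) (f : ℝ → ℝ) :
    cfc f ρ = (hρ.eigenvectorUnitary : Matrix n n 𝕜) *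
      diagonal (fun i ↦ (f (hρ.eigenvalues i) : 𝕜)) * (hρ.eigenvectorUnitary : Matrix n n 𝕜)ᴴ := by
  rw [hρ.cfc_eq, IsHermitian.cfc, Unitary.conjStarAlgAut_apply]
  rfl

theorem trace_cfc {ρ : Matrix n n 𝕜} (hρ : ρ.IsHermitian) (f : ℝ → ℝ) :
    (cfc f ρ).trace = ∑ i, (f (hρ.eigenvalues i) : 𝕜) := by
  rw [cfc_eq_mul_diagonal_mul hρ, trace_mul_cycle, ← star_eq_conjTranspose,
    Unitary.coe_star_mul_self, one_mul, trace_diagonal]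

theorem mul_cfc_self {ρ : Matrix n n 𝕜} (hρ : ρ.IsHermitian) (f : ℝ → ℝ) :
    ρ * cfc f ρ = cfc (fun x ↦ x * f x) ρ := by
  rw [cfc_mul (fun x ↦ x) f ρ (by fun_prop) (ρ.finite_real_spectrum.continuousOn f),
    cfc_id' ℝ ρ hρ.isSelfAdjoint]

/-- The matrix with entries `⟨uᵢ, X vⱼ⟩`, where `uᵢ` and `vⱼ` are the chosen orthonormal
eigenvectors of `ρ` and `σ`. -/
def eigenCoord {ρ σ : Matrix n n 𝕜} (hρ : ρ.IsHermitian) (hσ : σ.IsHermitian) (X : Matrix n n 𝕜) :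
    Matrix n n 𝕜 :=
  (hρ.eigenvectorUnitary : Matrix n n 𝕜)ᴴ * X * (hσ.eigenvectorUnitary : Matrix n n 𝕜)

theorem eigenCoord_surjective {ρ σ : Matrix n n 𝕜} (hρ : ρ.IsHermitian) (hσ : σ.IsHermitian) :
    Function.Surjective (eigenCoord hρ hσ) := fun Y ↦ by
  refine ⟨(hρ.eigenvectorUnitary : Matrix n n 𝕜) * Y *
    (hσ.eigenvectorUnitary : Matrix n n 𝕜)ᴴ, ?_⟩
  rw [eigenCoord, Matrix.mul_assoc, Matrix.mul_assoc, Matrix.mul_assoc, ← star_eq_conjTranspose,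
    ← star_eq_conjTranspose, Unitary.coe_star_mul_self, Matrix.mul_one, ← Matrix.mul_assoc,
    Unitary.coe_star_mul_self, Matrix.one_mul]

theorem trace_cfc_mul_mul_cfc_mul_conjTranspose {ρ σ : Matrix n n 𝕜} (hρ : ρ.IsHermitian)
    (hσ : σ.IsHermitian) (f g : ℝ → ℝ) (X Z : Matrix n n 𝕜) :
    (cfc f ρ * X * cfc g σ * Zᴴ).trace =
      ∑ z : n × n, (f (hρ.eigenvalues z.1) : 𝕜) * (g (hσ.eigenvalues z.2) : 𝕜) *
        (eigenCoord hρ hσ X z.1 z.2 * star (eigenCoord hρ hσ Z z.1 z.2)) := by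
  rw [← trace_diagonal_mul_mul_diagonal_mul_conjTranspose
    (fun i ↦ (f (hρ.eigenvalues i) : 𝕜)) (eigenCoord hρ hσ X)
    (fun j ↦ (g (hσ.eigenvalues j) : 𝕜)) (eigenCoord hρ hσ Z),
    cfc_eq_mul_diagonal_mul hρ, cfc_eq_mul_diagonal_mul hσ]
  simp only [eigenCoord, conjTranspose_mul, conjTranspose_conjTranspose, Matrix.mul_assoc]
  rw [trace_mul_comm]
  simp only [Matrix.mul_assoc]

theorem re_trace_cfc_mul_mul_cfc_mul_conjTranspose_self {ρ σ : Matrix n n 𝕜} (hρ : ρ.IsHermitian)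
    (hσ : σ.IsHermitian) (f g : ℝ → ℝ) (X : Matrix n n 𝕜) :
    RCLike.re (cfc f ρ * X * cfc g σ * Xᴴ).trace =
      ∑ z : n × n, f (hρ.eigenvalues z.1) * g (hσ.eigenvalues z.2) *
        ‖eigenCoord hρ hσ X z.1 z.2‖ ^ 2 := by
  rw [trace_cfc_mul_mul_cfc_mul_conjTranspose hρ hσ, map_sum]
  refine Finset.sum_congr rfl fun z _ ↦ ?_
  rw [RCLike.star_def, RCLike.mul_conj]
  norm_cast

/-- The squared moduli `|⟨uᵢ, vⱼ⟩|²` of the inner products between the eigenvectors `uᵢ` of `ρ` and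
`vⱼ` of `σ`, indexed by the pairs `(i, j)`. -/
def eigenOverlap {ρ σ : Matrix n n 𝕜} (hρ : ρ.IsHermitian) (hσ : σ.IsHermitian) (z : n × n) : ℝ :=
  ‖eigenCoord hρ hσ 1 z.1 z.2‖ ^ 2

theorem eigenOverlap_nonneg {ρ σ : Matrix n n 𝕜} (hρ : ρ.IsHermitian) (hσ : σ.IsHermitian)
    (z : n × n) : 0 ≤ eigenOverlap hρ hσ z :=
  sq_nonneg _

theorem re_trace_cfc_mul_cfc {ρ σ : Matrix n n 𝕜} (hρ : ρ.IsHermitian) (hσ : σ.IsHermitian)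
    (f g : ℝ → ℝ) :
    RCLike.re (cfc f ρ * cfc g σ).trace =
      ∑ z, eigenOverlap hρ hσ z * (f (hρ.eigenvalues z.1) * g (hσ.eigenvalues z.2)) := by
  simpa [eigenOverlap, mul_comm (_ ^ 2)] using
    re_trace_cfc_mul_mul_cfc_mul_conjTranspose_self hρ hσ f g 1

theorem re_trace_mul_cfc {ρ σ : Matrix n n 𝕜} (hρ : ρ.IsHermitian) (hσ : σ.IsHermitian)
    (g : ℝ → ℝ) :
    RCLike.re (ρ * cfc g σ).trace =
      ∑ z, eigenOverlap hρ hσ z * (hρ.eigenvalues z.1 * g (hσ.eigenvalues z.2)) := by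
  simpa only [cfc_id' ℝ ρ hρ.isSelfAdjoint] using re_trace_cfc_mul_cfc hρ hσ (fun x ↦ x) g

theorem sum_eigenOverlap_mul_apply_eigenvalues {ρ σ : Matrix n n 𝕜} (hρ : ρ.IsHermitian)
    (hσ : σ.IsHermitian) (f : ℝ → ℝ) :
    ∑ z, eigenOverlap hρ hσ z * f (hρ.eigenvalues z.1) = RCLike.re (cfc f ρ).trace := by
  simpa [cfc_const_one ℝ σ hσ.isSelfAdjoint] using (re_trace_cfc_mul_cfc hρ hσ f fun _ ↦ 1).symm

theorem re_trace_mul_cfc_nonneg {ρ σ : Matrix n n 𝕜} (hρ : ρ.PosSemidef) (hσ : σ.IsHermitian)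
    {g : ℝ → ℝ} (hg : ∀ x, 0 ≤ g x) : 0 ≤ RCLike.re (ρ * cfc g σ).trace := by
  rw [re_trace_mul_cfc hρ.1 hσ]
  exact Finset.sum_nonneg fun z _ ↦
    mul_nonneg (eigenOverlap_nonneg _ _ _) (mul_nonneg (hρ.eigenvalues_nonneg _) (hg _))

theorem eigenOverlap_mul_eigenvalues_eq_zero {ρ σ : Matrix n n 𝕜} (hρ : ρ.PosSemidef)
    (hσ : σ.IsHermitian) (hle : (σ - ρ).PosSemidef) {z : n × n} (hz : hσ.eigenvalues z.2 = 0) :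
    eigenOverlap hρ.1 hσ z * hρ.1.eigenvalues z.1 = 0 := by
  -- `g(σ)` is the projection onto the kernel of `σ`; it is orthogonal to `ρ` because `ρ ≤ σ`.
  let g : ℝ → ℝ := fun x ↦ if x = 0 then 1 else 0
  have hg (x : ℝ) : 0 ≤ g x := by positivity
  have hσg : RCLike.re (σ * cfc g σ).trace = 0 := by
    have hmul : (fun x ↦ x * g x) = fun _ ↦ 0 := funext fun x ↦ by simp +contextual [g]
    rw [mul_cfc_self hσ, hmul, cfc_const_zero, trace_zero, map_zero]
  have hρg : RCLike.re (ρ * cfc g σ).trace ≤ 0 := by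
    have hdiff := re_trace_mul_cfc_nonneg hle hσ hg
    rw [Matrix.sub_mul, trace_sub, map_sub, hσg] at hdiff
    linarith
  have hterm (z : n × n) : 0 ≤ eigenOverlap hρ.1 hσ z *
      (hρ.1.eigenvalues z.1 * g (hσ.eigenvalues z.2)) :=
    mul_nonneg (eigenOverlap_nonneg _ _ _) (mul_nonneg (hρ.eigenvalues_nonneg _) (hg _))
  rw [re_trace_mul_cfc hρ.1 hσ] at hρg
  have hzero := (Finset.sum_eq_zero_iff_of_nonneg fun z _ ↦ hterm z).1
    (hρg.antisymm (Finset.sum_nonneg fun z _ ↦ hterm z)) z (Finset.mem_univ z)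
  simpa [g, hz] using hzero

/-- The concave form `2 Re⟨X, ρ⟩ - Re⟨X, M X⟩` in the trace inner product, where `M X = Xσ + tρX`.
Its maximum `⟨ρ, M⁻¹ρ⟩` is a matrix element of a resolvent of the relative modular operator
`X ↦ ρ⁻¹Xσ`. -/
def resolventForm (ρ σ : Matrix n n 𝕜) (t : ℝ) (X : Matrix n n 𝕜) : ℝ :=
  2 * RCLike.re (ρ * Xᴴ).trace - RCLike.re (σ * (Xᴴ * X)).trace -
    t * RCLike.re (ρ * (X * Xᴴ)).trace

/-- Umegaki's quantum relative entropy `D(ρ‖σ) = tr ρ(log ρ - log σ)`, in natural units. Since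
`Real.log 0 = 0`, it only has its usual meaning when the kernel of `σ` lies in that of `ρ`. -/
def relEntropy (ρ σ : Matrix n n 𝕜) : ℝ :=
  RCLike.re (ρ * (cfc Real.log ρ - cfc Real.log σ)).trace

/-- The eigenvalues `sⱼ / rᵢ` of the relative modular operator `X ↦ ρ⁻¹Xσ`, indexed by the pairs
`(i, j)`; those with `rᵢ = 0` are set to `0`. -/
def modularEigenvalue {ρ σ : Matrix n n 𝕜} (hρ : ρ.IsHermitian) (hσ : σ.IsHermitian)
    (z : n × n) : ℝ :=
  hσ.eigenvalues z.2 / hρ.eigenvalues z.1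

theorem modularEigenvalue_pos {ρ σ : Matrix n n 𝕜} (hρ : ρ.PosSemidef) (hσ : σ.PosSemidef)
    (hle : (σ - ρ).PosSemidef) (z : n × n)
    (hz : eigenOverlap hρ.1 hσ.1 z * hρ.1.eigenvalues z.1 ≠ 0) :
    0 < modularEigenvalue hρ.1 hσ.1 z :=
  div_pos
    ((hσ.eigenvalues_nonneg _).lt_of_ne'
      fun hs ↦ hz (eigenOverlap_mul_eigenvalues_eq_zero hρ hσ.1 hle hs))
    ((hρ.eigenvalues_nonneg _).lt_of_ne' (right_ne_zero_of_mul hz))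

theorem relEntropy_eq_neg_sum_log_modularEigenvalue {ρ σ : Matrix n n 𝕜} (hρ : ρ.PosSemidef)
    (hσ : σ.PosSemidef) (hle : (σ - ρ).PosSemidef) :
    relEntropy ρ σ = -∑ z, eigenOverlap hρ.1 hσ.1 z * hρ.1.eigenvalues z.1 *
      Real.log (modularEigenvalue hρ.1 hσ.1 z) := by
  have hself : RCLike.re (ρ * cfc Real.log ρ).trace =
      ∑ z, eigenOverlap hρ.1 hσ.1 z *
        (hρ.1.eigenvalues z.1 * Real.log (hρ.1.eigenvalues z.1)) := by
    rw [mul_cfc_self hρ.1, sum_eigenOverlap_mul_apply_eigenvalues hρ.1 hσ.1 fun x ↦ x * Real.log x]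
  rw [relEntropy, Matrix.mul_sub, trace_sub, map_sub, hself, re_trace_mul_cfc hρ.1 hσ.1,
    ← Finset.sum_sub_distrib, ← Finset.sum_neg_distrib]
  refine Finset.sum_congr rfl fun z _ ↦ ?_
  by_cases hz : eigenOverlap hρ.1 hσ.1 z * hρ.1.eigenvalues z.1 = 0
  · simp only [← mul_assoc, hz, zero_mul, sub_self, neg_zero]
  · obtain ⟨hs, hr⟩ := div_ne_zero_iff.1 (modularEigenvalue_pos hρ hσ hle z hz).ne'
    rw [modularEigenvalue, Real.log_div hs hr]
    ring

theorem two_mul_re_mul_star_sub_eq (w y : 𝕜) {r s t : ℝ} (hr : 0 ≤ r) (hs : 0 ≤ s) (ht : 0 < t) :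
    2 * (r * RCLike.re (w * star y)) - s * ‖y‖ ^ 2 - t * (r * ‖y‖ ^ 2) =
      ‖w‖ ^ 2 * r / (t + s / r) - (s + t * r) * ‖y - ((r / (s + t * r) : ℝ) : 𝕜) * w‖ ^ 2 := by
  rcases hr.eq_or_lt with rfl | hr
  · simp
  have hnorm (c : ℝ) : ‖y - (c : 𝕜) * w‖ ^ 2 =
      ‖y‖ ^ 2 - 2 * (c * RCLike.re (w * star y)) + c ^ 2 * ‖w‖ ^ 2 := by
    rw [@norm_sub_sq 𝕜, RCLike.inner_apply, mul_assoc, RCLike.re_ofReal_mul, norm_mul, mul_pow,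
      RCLike.norm_ofReal, sq_abs, RCLike.star_def]
  rw [hnorm]
  field_simp
  ring

theorem resolventForm_eq {ρ σ : Matrix n n 𝕜} (hρ : ρ.PosSemidef) (hσ : σ.PosSemidef) {t : ℝ}
    (ht : 0 < t) (X : Matrix n n 𝕜) :
    resolventForm ρ σ t X =
      ∑ z, eigenOverlap hρ.1 hσ.1 z * hρ.1.eigenvalues z.1 /
          (t + modularEigenvalue hρ.1 hσ.1 z) -
        ∑ z : n × n, (hσ.1.eigenvalues z.2 + t * hρ.1.eigenvalues z.1) *
          ‖eigenCoord hρ.1 hσ.1 X z.1 z.2 -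
            ((hρ.1.eigenvalues z.1 / (hσ.1.eigenvalues z.2 + t * hρ.1.eigenvalues z.1) : ℝ) : 𝕜) *
              eigenCoord hρ.1 hσ.1 1 z.1 z.2‖ ^ 2 := by
  have hid : cfc (fun x : ℝ ↦ x) ρ = ρ := cfc_id' ℝ ρ hρ.1.isSelfAdjoint
  have hid' : cfc (fun x : ℝ ↦ x) σ = σ := cfc_id' ℝ σ hσ.1.isSelfAdjoint
  have hone : cfc (fun _ : ℝ ↦ 1) ρ = 1 := cfc_const_one ℝ ρ hρ.1.isSelfAdjoint
  have hone' : cfc (fun _ : ℝ ↦ 1) σ = 1 := cfc_const_one ℝ σ hσ.1.isSelfAdjoint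
  have hlinear := trace_cfc_mul_mul_cfc_mul_conjTranspose hρ.1 hσ.1 (fun x ↦ x) (fun _ ↦ 1) 1 X
  have hright := re_trace_cfc_mul_mul_cfc_mul_conjTranspose_self hρ.1 hσ.1 (fun _ ↦ 1)
    (fun x ↦ x) X
  have hleft := re_trace_cfc_mul_mul_cfc_mul_conjTranspose_self hρ.1 hσ.1 (fun x ↦ x)
    (fun _ ↦ 1) X
  simp only [hid, hid', hone, hone', one_mul, mul_one,
    RCLike.ofReal_one] at hlinear hright hleft
  rw [resolventForm, ← Matrix.mul_assoc σ, trace_mul_cycle, ← Matrix.mul_assoc ρ, hlinear, hright,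
    hleft, map_sum]
  simp only [RCLike.re_ofReal_mul, Finset.mul_sum, ← Finset.sum_sub_distrib]
  exact Finset.sum_congr rfl fun z _ ↦ two_mul_re_mul_star_sub_eq _ _
    (hρ.eigenvalues_nonneg _) (hσ.eigenvalues_nonneg _) ht

theorem isGreatest_range_resolventForm {ρ σ : Matrix n n 𝕜} (hρ : ρ.PosSemidef)
    (hσ : σ.PosSemidef) {t : ℝ} (ht : 0 < t) :
    IsGreatest (Set.range (resolventForm ρ σ t))
      (∑ z, eigenOverlap hρ.1 hσ.1 z * hρ.1.eigenvalues z.1 /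
        (t + modularEigenvalue hρ.1 hσ.1 z)) := by
  constructor
  · obtain ⟨X, hX⟩ := eigenCoord_surjective hρ.1 hσ.1 (of fun i j ↦
      ((hρ.1.eigenvalues i / (hσ.1.eigenvalues j + t * hρ.1.eigenvalues i) : ℝ) : 𝕜) *
        eigenCoord hρ.1 hσ.1 1 i j)
    exact ⟨X, by simp [resolventForm_eq hρ hσ ht, hX]⟩
  · rintro _ ⟨X, rfl⟩
    rw [resolventForm_eq hρ hσ ht]
    refine sub_le_self _ (Finset.sum_nonneg fun z _ ↦ mul_nonneg ?_ (sq_nonneg _))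
    exact add_nonneg (hσ.eigenvalues_nonneg _) (mul_nonneg ht.le (hρ.eigenvalues_nonneg _))

theorem relEntropy_le_of_resolventForm_le {ρ σ : Matrix n n 𝕜} {ρ' σ' : Matrix m m 𝕜}
    (hρ : ρ.PosSemidef) (hσ : σ.PosSemidef) (hle : (σ - ρ).PosSemidef)
    (hρ' : ρ'.PosSemidef) (hσ' : σ'.PosSemidef) (hle' : (σ' - ρ').PosSemidef)
    (htr : ρ.trace = ρ'.trace)
    (h : ∀ t X, 0 < t → ∃ X', resolventForm ρ σ t X ≤ resolventForm ρ' σ' t X') :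
    relEntropy ρ σ ≤ relEntropy ρ' σ' := by
  have htrace : ∑ z, eigenOverlap hρ'.1 hσ'.1 z * hρ'.1.eigenvalues z.1 =
      ∑ z, eigenOverlap hρ.1 hσ.1 z * hρ.1.eigenvalues z.1 := by
    rw [sum_eigenOverlap_mul_apply_eigenvalues hρ.1 hσ.1 fun x ↦ x,
      sum_eigenOverlap_mul_apply_eigenvalues hρ'.1 hσ'.1 fun x ↦ x, cfc_id' ℝ ρ hρ.1.isSelfAdjoint,
      cfc_id' ℝ ρ' hρ'.1.isSelfAdjoint, htr]
  rw [relEntropy_eq_neg_sum_log_modularEigenvalue hρ hσ hle,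
    relEntropy_eq_neg_sum_log_modularEigenvalue hρ' hσ' hle']
  refine neg_le_neg (sum_mul_log_le_sum_mul_log (modularEigenvalue_pos hρ' hσ' hle')
    (modularEigenvalue_pos hρ hσ hle) htrace fun t ht ↦ ?_)
  obtain ⟨X, hX⟩ := (isGreatest_range_resolventForm hρ hσ ht).1
  obtain ⟨X', hX'⟩ := h t X ht
  rw [← hX]
  exact hX'.trans ((isGreatest_range_resolventForm hρ' hσ' ht).2 ⟨X', rfl⟩)

theorem relEntropy_self (ρ : Matrix n n 𝕜) : relEntropy ρ ρ = 0 := by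
  simp [relEntropy]

theorem relEntropy_nonpos_of_sub_posSemidef {ρ σ : Matrix n n 𝕜} (hρ : ρ.PosSemidef)
    (hσ : σ.PosSemidef) (hle : (σ - ρ).PosSemidef) : relEntropy ρ σ ≤ 0 := by
  rw [← relEntropy_self ρ]
  refine relEntropy_le_of_resolventForm_le hρ hσ hle hρ hρ (by simp [PosSemidef.zero]) rfl
    fun t X _ ↦ ⟨X, ?_⟩
  have hnonneg : 0 ≤ RCLike.re ((σ - ρ) * (Xᴴ * X)).trace := by
    rw [← Matrix.mul_assoc, trace_mul_cycle]
    exact (RCLike.le_iff_re_im.1 (hle.mul_mul_conjTranspose_same X).trace_nonneg).1.trans' (by simp)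
  rw [Matrix.sub_mul, trace_sub, map_sub] at hnonneg
  unfold resolventForm
  linarith

end Spectral

section PartialTrace

variable {A B : Type}

theorem ptraceB_add [Fintype B] (M N : Matrix (A × B) (A × B) ℂ) :
    ptraceB (M + N) = ptraceB M + ptraceB N := by
  ext
  simp [ptraceB, Finset.sum_add_distrib]

theorem ptraceA_add [Fintype A] (M N : Matrix (A × B) (A × B) ℂ) :
    ptraceA (M + N) = ptraceA M + ptraceA N := by
  ext
  simp [ptraceA, Finset.sum_add_distrib]

theorem ptraceB_smul [Fintype B] (c : ℂ) (M : Matrix (A × B) (A × B) ℂ) :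
    ptraceB (c • M) = c • ptraceB M := by
  ext
  simp [ptraceB, Finset.mul_sum]

theorem ptraceA_smul [Fintype A] (c : ℂ) (M : Matrix (A × B) (A × B) ℂ) :
    ptraceA (c • M) = c • ptraceA M := by
  ext
  simp [ptraceA, Finset.mul_sum]

theorem ptraceB_sub [Fintype B] (M N : Matrix (A × B) (A × B) ℂ) :
    ptraceB (M - N) = ptraceB M - ptraceB N := by
  ext
  simp [ptraceB]

theorem ptraceB_posSemidef [Fintype B] {M : Matrix (A × B) (A × B) ℂ} (hM : M.PosSemidef) :
    (ptraceB M).PosSemidef := by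
  have hsum : ptraceB M = ∑ b, M.submatrix (·, b) (·, b) := by
    ext
    simp [ptraceB, Matrix.sum_apply]
  exact hsum ▸ posSemidef_sum _ fun b _ ↦ hM.submatrix _

theorem ptraceA_posSemidef [Fintype A] {M : Matrix (A × B) (A × B) ℂ} (hM : M.PosSemidef) :
    (ptraceA M).PosSemidef := by
  have hsum : ptraceA M = ∑ a, M.submatrix (a, ·) (a, ·) := by
    ext
    simp [ptraceA, Matrix.sum_apply]
  exact hsum ▸ posSemidef_sum _ fun a _ ↦ hM.submatrix _

theorem ptraceB_isHermitian [Fintype B] {M : Matrix (A × B) (A × B) ℂ} (hM : M.IsHermitian) :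
    (ptraceB M).IsHermitian := by
  ext i j
  simp [ptraceB, hM.apply]

theorem ptraceA_isHermitian [Fintype A] {M : Matrix (A × B) (A × B) ℂ} (hM : M.IsHermitian) :
    (ptraceA M).IsHermitian := by
  ext i j
  simp [ptraceA, hM.apply]

variable [Fintype A] [Fintype B]

theorem trace_ptraceB (M : Matrix (A × B) (A × B) ℂ) : (ptraceB M).trace = M.trace := by
  simp [ptraceB, Matrix.trace, Fintype.sum_prod_type]

theorem trace_ptraceA (M : Matrix (A × B) (A × B) ℂ) : (ptraceA M).trace = M.trace := by
  simp [ptraceA, Matrix.trace, Fintype.sum_prod_type_right]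

theorem trace_ptraceB_mul [DecidableEq B] (M : Matrix (A × B) (A × B) ℂ) (Y : Matrix A A ℂ) :
    (ptraceB M * Y).trace = (M * (Y ⊗ₖ (1 : Matrix B B ℂ))).trace := by
  simp only [Matrix.trace, diag_apply, mul_apply, Fintype.sum_prod_type, ptraceB, of_apply,
    kronecker_apply, one_apply, mul_ite, mul_one, mul_zero, Finset.sum_ite_eq', Finset.mem_univ,
    if_true, Finset.sum_mul]
  exact Finset.sum_congr rfl fun a _ ↦ Finset.sum_comm

theorem resolventForm_ptraceB [DecidableEq B] (ρ σ : Matrix (A × B) (A × B) ℂ) (t : ℝ)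
    (X : Matrix A A ℂ) :
    resolventForm (ptraceB ρ) (ptraceB σ) t X =
      resolventForm ρ σ t (X ⊗ₖ (1 : Matrix B B ℂ)) := by
  simp only [resolventForm, trace_ptraceB_mul, conjTranspose_kronecker, conjTranspose_one,
    ← mul_kronecker_mul, Matrix.mul_one]

theorem relEntropy_ptraceB_le [DecidableEq A] [DecidableEq B] {ρ σ : Matrix (A × B) (A × B) ℂ}
    (hρ : ρ.PosSemidef) (hσ : σ.PosSemidef) (hle : (σ - ρ).PosSemidef) :
    relEntropy (ptraceB ρ) (ptraceB σ) ≤ relEntropy ρ σ :=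
  relEntropy_le_of_resolventForm_le (ptraceB_posSemidef hρ) (ptraceB_posSemidef hσ)
    (ptraceB_sub σ ρ ▸ ptraceB_posSemidef hle) hρ hσ hle (trace_ptraceB ρ)
    fun t X _ ↦ ⟨_, (resolventForm_ptraceB ρ σ t X).le⟩

end PartialTrace

section Entropy

variable {n : Type} [Fintype n] [DecidableEq n]

theorem vnEntropy_eq_re_trace_cfc_negMulLog {ρ : Matrix n n ℂ} (hρ : ρ.IsHermitian) :
    vnEntropy ρ = (cfc Real.negMulLog ρ).trace.re / Real.log 2 := by
  rw [vnEntropy, dif_pos hρ, trace_cfc hρ, Complex.re_sum, Finset.sum_div,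
    ← Finset.sum_neg_distrib]
  refine Finset.sum_congr rfl fun i _ ↦ ?_
  simp only [Real.negMulLog, Real.logb, Complex.coe_algebraMap, Complex.ofReal_re]
  ring

theorem vnEntropy_eq_neg_re_trace_mul_cfc_log {ρ : Matrix n n ℂ} (hρ : ρ.IsHermitian) :
    vnEntropy ρ = -(ρ * cfc Real.log ρ).trace.re / Real.log 2 := by
  rw [vnEntropy_eq_re_trace_cfc_negMulLog hρ, mul_cfc_self hρ, ← Complex.neg_re, ← trace_neg,
    ← cfc_neg]
  simp only [Real.negMulLog_def, neg_mul]

theorem vnEntropy_smul {ρ : Matrix n n ℂ} (hρ : ρ.IsHermitian) (c : ℝ) :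
    vnEntropy ((c : ℂ) • ρ) =
      c * vnEntropy ρ + ρ.trace.re * (Real.negMulLog c / Real.log 2) := by
  have hscale : cfc Real.negMulLog (c • ρ) = cfc (fun x ↦ Real.negMulLog (c * x)) ρ :=
    (cfc_comp_const_mul c Real.negMulLog ρ (by fun_prop) hρ.isSelfAdjoint).symm
  have htrace : ρ.trace.re = ∑ i, hρ.eigenvalues i := by
    rw [hρ.trace_eq_sum_eigenvalues, Complex.re_sum]
    rfl
  rw [Complex.coe_smul, vnEntropy_eq_re_trace_cfc_negMulLog (hρ.smul (.all c)), hscale,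
    vnEntropy_eq_re_trace_cfc_negMulLog hρ, trace_cfc hρ, trace_cfc hρ, htrace]
  simp only [Complex.re_sum, Complex.coe_algebraMap, Complex.ofReal_re, Real.negMulLog_mul,
    Finset.sum_add_distrib, ← Finset.sum_mul, ← Finset.mul_sum]
  ring

theorem vnEntropy_add {M N : Matrix n n ℂ} (hM : M.IsHermitian) (hN : N.IsHermitian) :
    vnEntropy (M + N) =
      vnEntropy M + vnEntropy N + (relEntropy M (M + N) + relEntropy N (M + N)) / Real.log 2 := by
  rw [vnEntropy_eq_neg_re_trace_mul_cfc_log hM, vnEntropy_eq_neg_re_trace_mul_cfc_log hN,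
    vnEntropy_eq_neg_re_trace_mul_cfc_log (hM.add hN), relEntropy, relEntropy]
  simp only [Matrix.add_mul, Matrix.mul_sub, trace_add, trace_sub, map_sub, Complex.add_re,
    RCLike.re_eq_complex_re]
  ring

theorem vnEntropy_add_le {M N : Matrix n n ℂ} (hM : M.PosSemidef) (hN : N.PosSemidef) :
    vnEntropy (M + N) ≤ vnEntropy M + vnEntropy N := by
  have hDM : relEntropy M (M + N) ≤ 0 :=
    relEntropy_nonpos_of_sub_posSemidef hM (hM.add hN) (by rwa [add_sub_cancel_left])
  have hDN : relEntropy N (M + N) ≤ 0 :=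
    relEntropy_nonpos_of_sub_posSemidef hN (hM.add hN) (by rwa [add_sub_cancel_right])
  rw [vnEntropy_add hM.1 hN.1, add_le_iff_nonpos_right]
  exact div_nonpos_of_nonpos_of_nonneg (add_nonpos hDM hDN) (Real.log_nonneg one_le_two)

theorem shannon_eq_sum_negMulLog {I : Type} [Fintype I] (p : I → ℝ) :
    shannon p = ∑ i, Real.negMulLog (p i) / Real.log 2 := by
  rw [shannon, ← Finset.sum_neg_distrib]
  refine Finset.sum_congr rfl fun i _ ↦ ?_
  rw [Real.negMulLog, Real.logb]
  ring

end Entropy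

section MutualInformation

variable {A B : Type} [Fintype A] [Fintype B] [DecidableEq A] [DecidableEq B]

theorem vnEntropy_ptraceB_sub_vnEntropy_add_le {M N : Matrix (A × B) (A × B) ℂ}
    (hM : M.PosSemidef) (hN : N.PosSemidef) :
    vnEntropy (ptraceB (M + N)) - vnEntropy (M + N) ≤
      (vnEntropy (ptraceB M) - vnEntropy M) + (vnEntropy (ptraceB N) - vnEntropy N) := by
  have hDM : relEntropy (ptraceB M) (ptraceB (M + N)) ≤ relEntropy M (M + N) :=
    relEntropy_ptraceB_le hM (hM.add hN) (by rwa [add_sub_cancel_left])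
  have hDN : relEntropy (ptraceB N) (ptraceB (M + N)) ≤ relEntropy N (M + N) :=
    relEntropy_ptraceB_le hN (hM.add hN) (by rwa [add_sub_cancel_right])
  have hD := div_le_div_of_nonneg_right (add_le_add hDM hDN) (Real.log_nonneg one_le_two)
  rw [ptraceB_add] at hD ⊢
  rw [vnEntropy_add hM.1 hN.1,
    vnEntropy_add (ptraceB_posSemidef hM).1 (ptraceB_posSemidef hN).1]
  linarith

theorem mutInfo_add_le {M N : Matrix (A × B) (A × B) ℂ} (hM : M.PosSemidef)
    (hN : N.PosSemidef) : mutInfo (M + N) ≤ mutInfo M + mutInfo N := by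
  have hcond := vnEntropy_ptraceB_sub_vnEntropy_add_le hM hN
  have hmarg := vnEntropy_add_le (ptraceA_posSemidef hM) (ptraceA_posSemidef hN)
  rw [← ptraceA_add] at hmarg
  unfold mutInfo
  linarith

theorem mutInfo_smul {ρ : Matrix (A × B) (A × B) ℂ} (hρ : ρ.IsHermitian) (c : ℝ) :
    mutInfo ((c : ℂ) • ρ) = c * mutInfo ρ + ρ.trace.re * (Real.negMulLog c / Real.log 2) := by
  rw [mutInfo, mutInfo, ptraceB_smul, ptraceA_smul, vnEntropy_smul hρ,
    vnEntropy_smul (ptraceB_isHermitian hρ), vnEntropy_smul (ptraceA_isHermitian hρ),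
    trace_ptraceB, trace_ptraceA]
  ring

theorem mutInfo_zero : mutInfo (0 : Matrix (A × B) (A × B) ℂ) = 0 := by
  simpa using mutInfo_smul (A := A) (B := B) isHermitian_zero 0

theorem mutInfo_sum_le {K : Type*} {M : K → Matrix (A × B) (A × B) ℂ} (s : Finset K)
    (hM : ∀ k ∈ s, (M k).PosSemidef) : mutInfo (∑ k ∈ s, M k) ≤ ∑ k ∈ s, mutInfo (M k) :=
  Finset.le_sum_of_subadditive_on_pred mutInfo PosSemidef mutInfo_zero.le
    (fun _ _ ↦ mutInfo_add_le) (fun _ _ ↦ PosSemidef.add) M hM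

end MutualInformation

/-- I(∑_k p_k ρ^k) ≤ ∑_k p_k I(ρ^k) + S({p_k}). -/
theorem stmt_4 {A B K : Type} [Fintype A] [Fintype B] [Fintype K]
    [DecidableEq A] [DecidableEq B]
    (p : K → ℝ) (hp : ∀ k, 0 ≤ p k) (hp1 : ∑ k, p k = 1)
    (ρ : K → Matrix (A × B) (A × B) ℂ) (hρ : ∀ k, IsDensity (ρ k)) :
    mutInfo (∑ k, (p k : ℂ) • ρ k) ≤ ∑ k, p k * mutInfo (ρ k) + shannon p := by
  have hpos (k : K) : ((p k : ℂ) • ρ k).PosSemidef :=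
    (hρ k).1.smul (Complex.zero_le_real.2 (hp k))
  have hscale (k : K) : mutInfo ((p k : ℂ) • ρ k) =
      p k * mutInfo (ρ k) + Real.negMulLog (p k) / Real.log 2 := by
    rw [mutInfo_smul (hρ k).1.1, (hρ k).2, Complex.one_re, one_mul]
  calc mutInfo (∑ k, (p k : ℂ) • ρ k)
      ≤ ∑ k, mutInfo ((p k : ℂ) • ρ k) := mutInfo_sum_le Finset.univ fun k _ ↦ hpos k
    _ = ∑ k, p k * mutInfo (ρ k) + shannon p := by
      simp only [hscale, Finset.sum_add_distrib, shannon_eq_sum_negMulLog]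

end
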